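/- (Terminating very-well-poised ₆φ₅ summation) Let q, a, b, c be complex numbers, n a nonnegative integer, and suppose a has a square root a^{1/2} fixed; assume all denominator factors below are nonzero. Then ∑_{k=0}^{n} ((1 - a q^{2k})/(1 - a)) · ((a;q)_k (b;q)_k (c;q)_k (q^{-n};q)_k / ((q;q)_k (aq/b;q)_k (aq/c;q)_k (aq^{n+1};q)_k)) (a q^{n+1}/(bc))^k = (aq;q)_n (aq/(bc);q)_n / ((aq/b;q)_n (aq/c;q)_n). (Here the very-well-poised factor (1-aq^{2k})/(1-a) equals (qa^{1/2};q)_k(-qa^{1/2};q)_k/((a^{1/2};q)_k(-a^{1/2};q)_k).) -/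

import Mathlib

/-- The finite q-shifted factorial `(a;q)_k = ∏_{j=0}^{k-1} (1 - a q^j)`. -/
noncomputable def qPoch (a q : ℂ) (k : ℕ) : ℂ := ∏ j ∈ Finset.range k, (1 - a * q ^ j)

/-!
Write the summand, with `d = q ^ (-n)`, as the product of the very-well-poised weight in `(a, d)`
and the well-poised ratio in `(b, c)`. The weights telescope: their partial sums are products. The
consecutive differences of the ratios factor as well. Hence summation by parts turns the series with
parameters `(a, b, c, d)` into a multiple of the one with parameters `(a q, b, c, d q)`, which is
one term shorter, and the sum follows by induction on `n`. The factor `1 / (1 - a)` is left out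
during the induction, since `1 - a q ^ j` may vanish for some `1 ≤ j ≤ n`.
-/

section qPoch

variable (a q : ℂ)

lemma qPoch_zero : qPoch a q 0 = 1 := Finset.prod_range_zero _

lemma qPoch_succ (k : ℕ) : qPoch a q (k + 1) = qPoch a q k * (1 - a * q ^ k) :=
  Finset.prod_range_succ _ k

lemma qPoch_succ' (k : ℕ) : qPoch a q (k + 1) = (1 - a) * qPoch (a * q) q k := by
  simp only [qPoch, Finset.prod_range_succ', pow_succ', pow_zero, mul_one, mul_assoc,
    mul_comm (1 - a)]

variable {a q}

lemma qPoch_ne_zero_of_le {k m : ℕ} (hkm : k ≤ m) (h : qPoch a q m ≠ 0) : qPoch a q k ≠ 0 :=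
  ne_zero_of_dvd_ne_zero h
    (Finset.prod_dvd_prod_of_subset _ _ _ (Finset.range_subset_range.2 hkm))

lemma qPoch_eq_zero {k j : ℕ} (hj : j < k) (h : a * q ^ j = 1) : qPoch a q k = 0 :=
  Finset.prod_eq_zero (Finset.mem_range.2 hj) (by rw [h, sub_self])

end qPoch

/-- The `(a, d)`-part of the `k`-th very-well-poised term, multiplied by `1 - a`; its geometric
factor is `d⁻¹ ^ k`. -/
noncomputable def vwpWeight (a d q : ℂ) (k : ℕ) : ℂ :=
  (1 - a * q ^ (2 * k)) *
    (qPoch a q k * qPoch d q k / (qPoch q q k * qPoch (a * q / d) q k)) * d⁻¹ ^ k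

/-- The `(b, c)`-part of the `k`-th well-poised term, in the variable `x = a q`; its geometric
factor is `(x / (b c)) ^ k`. -/
noncomputable def wpRatio (x b c q : ℂ) (k : ℕ) : ℂ :=
  qPoch b q k * qPoch c q k / (qPoch (x / b) q k * qPoch (x / c) q k) * (x / (b * c)) ^ k

lemma sum_range_succ_vwpWeight {a d q : ℂ} (hd : d ≠ 0) {m : ℕ} (hqm : qPoch q q m ≠ 0)
    (hdm : qPoch (a * q / d) q m ≠ 0) :
    ∑ k ∈ Finset.range (m + 1), vwpWeight a d q k =
      qPoch a q (m + 1) * qPoch (d * q) q m / (qPoch q q m * qPoch (a * q / d) q m) * d⁻¹ ^ m := by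
  induction m with
  | zero => simp [vwpWeight, qPoch_zero, qPoch_succ]
  | succ m ih =>
    rw [qPoch_succ] at hqm hdm
    obtain ⟨hqm, hqm'⟩ := mul_ne_zero_iff.1 hqm
    obtain ⟨hdm, hdm'⟩ := mul_ne_zero_iff.1 hdm
    rw [Finset.sum_range_succ, ih hqm hdm, vwpWeight, qPoch_succ' d, qPoch_succ a q (m + 1),
      qPoch_succ (d * q), qPoch_succ q, qPoch_succ (a * q / d), pow_succ d⁻¹]
    have telescope : d * (1 - q * q ^ m) * (1 - a * q / d * q ^ m) +
        (1 - d) * (1 - a * q ^ (2 * (m + 1))) =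
        (1 - a * q ^ (m + 1)) * (1 - d * q * q ^ m) := by
      field_simp
      ring
    generalize 1 - q * q ^ m = u at *
    generalize 1 - a * q / d * q ^ m = v at *
    generalize qPoch (a * q / d) q m = D at *
    field_simp
    linear_combination qPoch a q (m + 1) * qPoch (d * q) q m * telescope

lemma wpRatio_sub_wpRatio_succ {x b c q : ℂ} (hb : b ≠ 0) (hc : c ≠ 0) {k : ℕ}
    (hbk : qPoch (x / b) q (k + 1) ≠ 0) (hck : qPoch (x / c) q (k + 1) ≠ 0) :
    wpRatio x b c q k - wpRatio x b c q (k + 1) =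
      (1 - x / (b * c)) * (1 - x * q ^ (2 * k)) *
        (qPoch b q k * qPoch c q k / (qPoch (x / b) q (k + 1) * qPoch (x / c) q (k + 1))) *
        (x / (b * c)) ^ k := by
  rw [qPoch_succ] at hbk hck
  obtain ⟨hbk, hbk'⟩ := mul_ne_zero_iff.1 hbk
  obtain ⟨hck, hck'⟩ := mul_ne_zero_iff.1 hck
  have factor : (1 - x / b * q ^ k) * (1 - x / c * q ^ k) -
      x / (b * c) * ((1 - b * q ^ k) * (1 - c * q ^ k)) =
      (1 - x / (b * c)) * (1 - x * q ^ (2 * k)) := by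
    field_simp
    ring
  simp only [wpRatio, qPoch_succ, pow_succ (x / (b * c))]
  rw [← factor]
  generalize x / (b * c) = y
  generalize 1 - x / b * q ^ k = u at *
  generalize 1 - x / c * q ^ k = v at *
  field_simp

lemma sum_vwpWeight_mul_wpRatio_sub {a b c d q : ℂ} (hq : q ≠ 0) (hb : b ≠ 0) (hc : c ≠ 0)
    (hd : d ≠ 0) {k : ℕ} (hqk : qPoch q q k ≠ 0) (hbk : qPoch (a * q / b) q (k + 1) ≠ 0)
    (hck : qPoch (a * q / c) q (k + 1) ≠ 0) (hdk : qPoch (a * q / d) q k ≠ 0) :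
    (∑ i ∈ Finset.range (k + 1), vwpWeight a d q i) *
        (wpRatio (a * q) b c q k - wpRatio (a * q) b c q (k + 1)) =
      (1 - a) * (1 - a * q / (b * c)) / ((1 - a * q / b) * (1 - a * q / c)) *
        (vwpWeight (a * q) (d * q) q k * wpRatio (a * q * q) b c q k) := by
  rw [sum_range_succ_vwpWeight hd hqk hdk, wpRatio_sub_wpRatio_succ hb hc hbk hck]
  have pow_vwp : d⁻¹ ^ k = (d * q)⁻¹ ^ k * q ^ k := by
    rw [← mul_pow, mul_inv, inv_mul_cancel_right₀ hq]
  have pow_wp : (a * q * q / (b * c)) ^ k = (a * q / (b * c)) ^ k * q ^ k := by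
    rw [← mul_pow, mul_div_right_comm]
  simp only [vwpWeight, wpRatio, qPoch_succ', mul_div_mul_right _ d hq, ← mul_div_right_comm _ q,
    pow_vwp, pow_wp]
  simp only [div_eq_mul_inv, mul_inv]
  ring

lemma sum_vwpWeight_mul_wpRatio_succ {a b c d q : ℂ} {n : ℕ} (hb : b ≠ 0) (hc : c ≠ 0)
    (hd : d * q ^ (n + 1) = 1) (hqn : qPoch q q (n + 1) ≠ 0)
    (hbn : qPoch (a * q / b) q (n + 1) ≠ 0) (hcn : qPoch (a * q / c) q (n + 1) ≠ 0)
    (hdn : qPoch (a * q / d) q (n + 1) ≠ 0) :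
    ∑ k ∈ Finset.range (n + 2), vwpWeight a d q k * wpRatio (a * q) b c q k =
      (1 - a) * (1 - a * q / (b * c)) / ((1 - a * q / b) * (1 - a * q / c)) *
        ∑ k ∈ Finset.range (n + 1),
          vwpWeight (a * q) (d * q) q k * wpRatio (a * q * q) b c q k := by
  have hd0 : d ≠ 0 := left_ne_zero_of_mul_eq_one hd
  have hq0 : q ≠ 0 := (pow_ne_zero_iff n.succ_ne_zero).1 (right_ne_zero_of_mul_eq_one hd)
  have total_weight : ∑ k ∈ Finset.range (n + 2), vwpWeight a d q k = 0 := by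
    rw [sum_range_succ_vwpWeight hd0 hqn hdn,
      qPoch_eq_zero n.lt_succ_self (by rw [mul_assoc, ← pow_succ', hd]), mul_zero, zero_div,
      zero_mul]
  have by_parts := Finset.sum_range_by_parts (wpRatio (a * q) b c q) (vwpWeight a d q) (n + 2)
  simp only [smul_eq_mul, total_weight, mul_zero, zero_sub, Nat.add_succ_sub_one] at by_parts
  simp only [mul_comm (vwpWeight a d q _), by_parts]
  rw [← Finset.sum_neg_distrib, Finset.mul_sum]
  refine Finset.sum_congr rfl fun k hk => ?_
  have hkn : k + 1 ≤ n + 1 := Finset.mem_range.1 hk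
  have hkn' : k ≤ n + 1 := k.le_succ.trans hkn
  rw [← neg_mul, neg_sub, mul_comm, sum_vwpWeight_mul_wpRatio_sub hq0 hb hc hd0
    (qPoch_ne_zero_of_le hkn' hqn) (qPoch_ne_zero_of_le hkn hbn) (qPoch_ne_zero_of_le hkn hcn)
    (qPoch_ne_zero_of_le hkn' hdn)]

theorem sum_vwpWeight_mul_wpRatio {a b c d q : ℂ} {n : ℕ} (hb : b ≠ 0) (hc : c ≠ 0)
    (hd : d * q ^ n = 1) (hqn : qPoch q q n ≠ 0) (hbn : qPoch (a * q / b) q n ≠ 0)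
    (hcn : qPoch (a * q / c) q n ≠ 0) (hdn : qPoch (a * q / d) q n ≠ 0) :
    ∑ k ∈ Finset.range (n + 1), vwpWeight a d q k * wpRatio (a * q) b c q k =
      qPoch a q (n + 1) * qPoch (a * q / (b * c)) q n /
        (qPoch (a * q / b) q n * qPoch (a * q / c) q n) := by
  induction n generalizing a d with
  | zero => simp [vwpWeight, wpRatio, qPoch_zero, qPoch_succ]
  | succ n ih =>
    have hq0 : q ≠ 0 := (pow_ne_zero_iff n.succ_ne_zero).1 (right_ne_zero_of_mul_eq_one hd)
    rw [sum_vwpWeight_mul_wpRatio_succ hb hc hd hqn hbn hcn hdn]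
    rw [qPoch_succ', ← mul_div_right_comm] at hbn hcn
    rw [ih (by rw [mul_assoc, ← pow_succ', hd]) (qPoch_ne_zero_of_le n.le_succ hqn)
      (right_ne_zero_of_mul hbn) (right_ne_zero_of_mul hcn)
      (by simpa only [mul_div_mul_right _ d hq0] using qPoch_ne_zero_of_le n.le_succ hdn)]
    simp only [qPoch_succ' _ q (_ + 1), qPoch_succ' (a * q / _), ← mul_div_right_comm _ q]
    rw [div_mul_div_comm, mul_mul_mul_comm, mul_mul_mul_comm (1 - a * q / b)]

/-- Summation of a terminating very-well-poised ₆φ₅ series: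
`∑_{k=0}^n ((1-aq^{2k})/(1-a)) ((a,b,c,q^{-n};q)_k/((q,aq/b,aq/c,aq^{n+1};q)_k))
    (aq^{n+1}/(bc))^k = ((aq,aq/(bc);q)_n)/((aq/b,aq/c;q)_n)`,
assuming nonzero denominator factors. -/
theorem terminating_vwp_6phi5_summation (q a b c : ℂ) (n : ℕ)
    (hq : q ≠ 0) (ha : a ≠ 1) (hb : b ≠ 0) (hc : c ≠ 0)
    (hden : ∀ k ≤ n, qPoch q q k ≠ 0 ∧ qPoch (a * q / b) q k ≠ 0 ∧
      qPoch (a * q / c) q k ≠ 0 ∧ qPoch (a * q ^ (n + 1)) q k ≠ 0) :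
    ∑ k ∈ Finset.range (n + 1),
        (1 - a * q ^ (2 * k)) / (1 - a) *
          (qPoch a q k * qPoch b q k * qPoch c q k * qPoch (q ^ (-(n : ℤ))) q k /
            (qPoch q q k * qPoch (a * q / b) q k * qPoch (a * q / c) q k *
              qPoch (a * q ^ (n + 1)) q k)) *
          (a * q ^ (n + 1) / (b * c)) ^ k =
      qPoch (a * q) q n * qPoch (a * q / (b * c)) q n /
        (qPoch (a * q / b) q n * qPoch (a * q / c) q n) := by
  have hd : q ^ (-(n : ℤ)) * q ^ n = 1 := by
    rw [zpow_neg, zpow_natCast, inv_mul_cancel₀ (pow_ne_zero n hq)]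
  have had : a * q / q ^ (-(n : ℤ)) = a * q ^ (n + 1) := by
    rw [zpow_neg, zpow_natCast, div_inv_eq_mul, mul_assoc, ← pow_succ']
  have ha' : 1 - a ≠ 0 := sub_ne_zero.2 ha.symm
  obtain ⟨hqn, hbn, hcn, hdn⟩ := hden n le_rfl
  have summation := sum_vwpWeight_mul_wpRatio hb hc hd hqn hbn hcn (by rwa [had])
  rw [qPoch_succ', mul_assoc, mul_div_assoc, ← inv_mul_eq_iff_eq_mul₀ ha',
    Finset.mul_sum] at summation
  rw [← summation]
  refine Finset.sum_congr rfl fun k _ => ?_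
  have pow_eq : (a * q ^ (n + 1) / (b * c)) ^ k =
      (q ^ (-(n : ℤ)))⁻¹ ^ k * (a * q / (b * c)) ^ k := by
    rw [← had, ← mul_pow]
    ring
  rw [pow_eq, vwpWeight, wpRatio, had]
  ring
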